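/- Let S be a stable matching in G* with level partitions A = A_0 ∪ ⋯ ∪ A_{n0−1} and B = B_0 ∪ ⋯ ∪ B_{n0−1}. Then every edge of E that blocks S' lies in A_i × B_j for some i ≤ j−1. -/

import Mathlib

open Classical

noncomputable section

namespace PopMax

/-- A bipartite preference instance `G = (A ∪ B, E)`:
`E a b` says there is an edge between `a ∈ A` and `b ∈ B`;
`prefA a b b'` says `a` strictly prefers `b` to `b'`;
`prefB b a a'` says `b` strictly prefers `a` to `a'`. -/
structure PrefSys (A : Type*) (B : Type*) where
  E : A → B → Prop
  prefA : A → B → B → Prop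
  prefB : B → A → A → Prop

/-- Every node has a strict (linear) preference order over its neighbors. -/
def PrefSys.IsValid {A B : Type*} (I : PrefSys A B) : Prop :=
  (∀ a b, ¬ I.prefA a b b) ∧
  (∀ a b₁ b₂ b₃, I.prefA a b₁ b₂ → I.prefA a b₂ b₃ → I.prefA a b₁ b₃) ∧
  (∀ a b₁ b₂, I.E a b₁ → I.E a b₂ → b₁ ≠ b₂ → I.prefA a b₁ b₂ ∨ I.prefA a b₂ b₁) ∧
  (∀ b a, ¬ I.prefB b a a) ∧
  (∀ b a₁ a₂ a₃, I.prefB b a₁ a₂ → I.prefB b a₂ a₃ → I.prefB b a₁ a₃) ∧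
  (∀ b a₁ a₂, I.E a₁ b → I.E a₂ b → a₁ ≠ a₂ → I.prefB b a₁ a₂ ∨ I.prefB b a₂ a₁)

variable {A B : Type*}

/-- A matching: a set of pairwise disjoint edges. -/
def IsMatching (I : PrefSys A B) (M : Finset (A × B)) : Prop :=
  (∀ p ∈ M, I.E p.1 p.2) ∧
  (∀ p ∈ M, ∀ q ∈ M, p.1 = q.1 → p = q) ∧
  (∀ p ∈ M, ∀ q ∈ M, p.2 = q.2 → p = q)

def matchedA (M : Finset (A × B)) (a : A) : Prop := ∃ b, (a, b) ∈ M
def matchedB (M : Finset (A × B)) (b : B) : Prop := ∃ a, (a, b) ∈ M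

/-- A maximum matching: a matching of maximum cardinality. -/
def IsMaximumMatching (I : PrefSys A B) (M : Finset (A × B)) : Prop :=
  IsMatching I M ∧ ∀ N : Finset (A × B), IsMatching I N → N.card ≤ M.card

/-- A perfect matching matches all nodes. -/
def IsPerfectMatching (I : PrefSys A B) (M : Finset (A × B)) : Prop :=
  IsMatching I M ∧ (∀ a, matchedA M a) ∧ (∀ b, matchedB M b)

/-- `a ∈ A` prefers matching `M` to matching `N`. -/
def prefersA (I : PrefSys A B) (a : A) (M N : Finset (A × B)) : Prop :=
  ∃ b, (a, b) ∈ M ∧ (¬ matchedA N a ∨ ∃ b', (a, b') ∈ N ∧ I.prefA a b b')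

/-- `b ∈ B` prefers matching `M` to matching `N`. -/
def prefersB (I : PrefSys A B) (b : B) (M N : Finset (A × B)) : Prop :=
  ∃ a, (a, b) ∈ M ∧ (¬ matchedB N b ∨ ∃ a', (a', b) ∈ N ∧ I.prefB b a a')

/-- A node `u ∈ A ∪ B` prefers matching `M` to matching `N`. -/
def prefers (I : PrefSys A B) (u : A ⊕ B) (M N : Finset (A × B)) : Prop :=
  match u with
  | Sum.inl a => prefersA I a M N
  | Sum.inr b => prefersB I b M N

/-- `φ(M,N)`: the number of nodes preferring `M` to `N`. -/
def phi [Fintype A] [Fintype B] (I : PrefSys A B) (M N : Finset (A × B)) : ℕ :=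
  (Finset.univ.filter (fun u : A ⊕ B => prefers I u M N)).card

/-- `Δ(M,N) = φ(M,N) − φ(N,M)`. -/
def Delta [Fintype A] [Fintype B] (I : PrefSys A B) (M N : Finset (A × B)) : ℤ :=
  (phi I M N : ℤ) - (phi I N M : ℤ)

/-- A popular max-matching: a maximum matching `M` with `Δ(M,N) ≥ 0`
for every maximum matching `N`. -/
def IsPopularMaxMatching [Fintype A] [Fintype B] (I : PrefSys A B)
    (M : Finset (A × B)) : Prop :=
  IsMaximumMatching I M ∧
    ∀ N : Finset (A × B), IsMaximumMatching I N → 0 ≤ Delta I M N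

/-- The edge `(a,b) ∉ M` blocks `M`. -/
def Blocks (I : PrefSys A B) (M : Finset (A × B)) (a : A) (b : B) : Prop :=
  I.E a b ∧ (a, b) ∉ M ∧
  (¬ matchedA M a ∨ ∃ b', (a, b') ∈ M ∧ I.prefA a b b') ∧
  (¬ matchedB M b ∨ ∃ a', (a', b) ∈ M ∧ I.prefB b a a')

/-- A stable matching: a matching with no blocking edge. -/
def IsStable (I : PrefSys A B) (S : Finset (A × B)) : Prop :=
  IsMatching I S ∧ ∀ a b, ¬ Blocks I S a b

/-- The edge weight `wt_M(a,b) ∈ {0, ±2}`. -/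
def wt (I : PrefSys A B) (M : Finset (A × B)) (a : A) (b : B) : ℤ :=
  if Blocks I M a b then 2
  else if (∃ b', (a, b') ∈ M ∧ I.prefA a b' b) ∧ (∃ a', (a', b) ∈ M ∧ I.prefB b a' a) then -2
  else 0

/-- The underlying simple graph on the node set `A ⊕ B`. -/
def graphOf (I : PrefSys A B) : SimpleGraph (A ⊕ B) :=
  SimpleGraph.fromRel (fun u w =>
    match u, w with
    | Sum.inl a, Sum.inr b => I.E a b
    | _, _ => False)

/-- The (undirected) edge `e` is an edge of the matching `M`. -/
def edgeInM (M : Finset (A × B)) (e : Sym2 (A ⊕ B)) : Prop :=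
  ∃ a b, (a, b) ∈ M ∧ e = s(Sum.inl a, Sum.inr b)

/-- Consecutive edges alternate between `M` and `E ∖ M`. -/
def altRel (M : Finset (A × B)) (e f : Sym2 (A ⊕ B)) : Prop :=
  edgeInM M e ↔ ¬ edgeInM M f

/-- An alternating path with respect to `M`. -/
def IsAltPath (I : PrefSys A B) (M : Finset (A × B)) {u w : A ⊕ B}
    (p : (graphOf I).Walk u w) : Prop :=
  p.IsPath ∧ List.Chain' (altRel M) p.edges

/-- An alternating cycle with respect to `M` (alternation also across the wrap-around). -/
def IsAltCycle (I : PrefSys A B) (M : Finset (A × B)) {w : A ⊕ B}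
    (c : (graphOf I).Walk w w) : Prop :=
  c.IsCycle ∧ List.Chain' (altRel M) (c.edges ++ c.edges.take 1)

/-- `wt_M` as a function on undirected edges. -/
def wtSym (I : PrefSys A B) (M : Finset (A × B)) : Sym2 (A ⊕ B) → ℤ :=
  Sym2.lift ⟨fun u w =>
      match u, w with
      | Sum.inl a, Sum.inr b => wt I M a b
      | Sum.inr b, Sum.inl a => wt I M a b
      | _, _ => 0,
    by rintro (a | b) (a' | b') <;> rfl⟩

/-- `wt_M(ρ) = Σ_{e ∈ ρ} wt_M(e)` for a walk `ρ`. -/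
def wtWalk (I : PrefSys A B) (M : Finset (A × B)) {u w : A ⊕ B}
    (p : (graphOf I).Walk u w) : ℤ :=
  (p.edges.map (wtSym I M)).sum

/-- The node `u ∈ A ∪ B` is unmatched in `M`. -/
def unmatchedNode (M : Finset (A × B)) : A ⊕ B → Prop
  | Sum.inl a => ¬ matchedA M a
  | Sum.inr b => ¬ matchedB M b

/-- The set of edges `(a,b) ∈ A × B` used by the walk `p`. -/
def pairsOf [Fintype A] [Fintype B] (I : PrefSys A B) {u w : A ⊕ B}
    (p : (graphOf I).Walk u w) : Finset (A × B) :=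
  Finset.univ.filter (fun ab : A × B => s(Sum.inl ab.1, Sum.inr ab.2) ∈ p.edges)

/-- `M` is Pareto-optimal: no matching `N` has `φ(N,M) > 0` and `φ(M,N) = 0`. -/
def IsParetoOptimal [Fintype A] [Fintype B] (I : PrefSys A B) (M : Finset (A × B)) : Prop :=
  ¬ ∃ N : Finset (A × B), IsMatching I N ∧ 0 < phi I N M ∧ phi I M N = 0

/-! ### The auxiliary instance `G*` -/

/-- `A* = {a_0, …, a_{n0−1} : a ∈ A}` where `n0 = |A|`. -/
abbrev AStar (A : Type*) [Fintype A] : Type _ := A × Fin (Fintype.card A)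

/-- `B* = B̃ ∪ {d_1(a), …, d_{n0−1}(a) : a ∈ A}`; the dummy node `(a, j)`
(with `j : Fin (n0 − 1)`) stands for `d_{j+1}(a)`. -/
abbrev BStar (A : Type*) (B : Type*) [Fintype A] : Type _ :=
  B ⊕ (A × Fin (Fintype.card A - 1))

/-- The auxiliary instance `G*` with its edges and preferences. -/
def starSys [Fintype A] (I : PrefSys A B) : PrefSys (AStar A) (BStar A B) where
  E := fun ai w =>
    match ai, w with
    | (a, _i), Sum.inl b => I.E a b
    | (a, i), Sum.inr (a', j) => a = a' ∧ ((i : ℕ) = (j : ℕ) ∨ (i : ℕ) = (j : ℕ) + 1)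
  prefA := fun ai u v =>
    match ai, u, v with
    | (a, _i), Sum.inl b, Sum.inl b' => I.prefA a b b'
    | (a, i), Sum.inl _b, Sum.inr (a', j) => a = a' ∧ (j : ℕ) = (i : ℕ)
    | (a, i), Sum.inr (a', j), Sum.inl _b => a = a' ∧ (j : ℕ) + 1 = (i : ℕ)
    | (a, i), Sum.inr (a', j), Sum.inr (a'', j') =>
        a = a' ∧ a = a'' ∧ (j : ℕ) + 1 = (i : ℕ) ∧ (j' : ℕ) = (i : ℕ)
  prefB := fun w x y =>
    match w, x, y with
    | Sum.inl b, (a, i), (a', i') =>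
        (i' : ℕ) < (i : ℕ) ∨ ((i : ℕ) = (i' : ℕ) ∧ I.prefB b a a')
    | Sum.inr (a, j), (a', i), (a'', i') =>
        a' = a ∧ a'' = a ∧ (i : ℕ) = (j : ℕ) ∧ (i' : ℕ) = (j : ℕ) + 1

/-- The projection `S ↦ S'`: delete edges incident to dummy nodes and replace
`(a_i, b̃)` by `(a, b)`. -/
def proj [Fintype A] [Fintype B] (S : Finset (AStar A × BStar A B)) : Finset (A × B) :=
  Finset.univ.filter (fun ab : A × B =>
    ∃ i : Fin (Fintype.card A), ((ab.1, i), (Sum.inl ab.2 : BStar A B)) ∈ S)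

/-- `a ∈ A_i` for the level partition of `A` induced by a (stable) matching `S` in `G*`:
for `i ≤ n0 − 2`, `a ∈ A_i` iff `(a_i, b̃) ∈ S` for some `b̃ ∈ B̃`;
`A_{n0−1}` consists of all remaining nodes of `A`. -/
def AtLevelA [Fintype A] (S : Finset (AStar A × BStar A B)) (a : A) (i : ℕ) : Prop :=
  (i + 1 < Fintype.card A ∧
     ∃ j : Fin (Fintype.card A), (j : ℕ) = i ∧
       ∃ b : B, ((a, j), (Sum.inl b : BStar A B)) ∈ S) ∨
  (i + 1 = Fintype.card A ∧
     ∀ j : Fin (Fintype.card A), (j : ℕ) + 1 < Fintype.card A →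
       ∀ b : B, ((a, j), (Sum.inl b : BStar A B)) ∉ S)

/-- `b ∈ B_i` for the level partition of `B` induced by a (stable) matching `S` in `G*`:
for `1 ≤ i ≤ n0 − 1`, `b ∈ B_i` iff `(a_i, b̃) ∈ S` for some `a ∈ A_i`;
`B_0` consists of all remaining nodes of `B`. -/
def AtLevelB [Fintype A] (S : Finset (AStar A × BStar A B)) (b : B) (i : ℕ) : Prop :=
  (1 ≤ i ∧ i < Fintype.card A ∧
     ∃ j : Fin (Fintype.card A), (j : ℕ) = i ∧
       ∃ a : A, AtLevelA S a i ∧ ((a, j), (Sum.inl b : BStar A B)) ∈ S) ∨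
  (i = 0 ∧ ∀ j : Fin (Fintype.card A), 1 ≤ (j : ℕ) →
       ∀ a : A, AtLevelA S a (j : ℕ) → ((a, j), (Sum.inl b : BStar A B)) ∉ S)

/-!
For each `a`, the `n₀ - 1` dummies of `a` can be matched only to the `n₀` copies of `a`, and in a
stable matching `S` every dummy is matched because `d_{i+1}(a)` is the top choice of `a_{i+1}`.
Counting, exactly one copy `a_k` is left without a dummy; hence `S'` is a matching, and `k` is the
level of `a`. Suppose `(a, b)` blocks `S'`. Then `a_k` prefers `b̃` to its partner in `S`, so by
stability `b̃` is matched in `S` to some `a'_i` that it likes at least as much as `a_k`. As `b`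
prefers `a` to `a'`, this forces `k < i`.
-/

section Matching

variable {I : PrefSys A B} {M : Finset (A × B)} {a a' : A} {b b' : B}

theorem IsMatching.snd_unique (hM : IsMatching I M) (h : (a, b) ∈ M) (h' : (a, b') ∈ M) :
    b = b' :=
  congrArg Prod.snd (hM.2.1 _ h _ h' rfl)

theorem IsMatching.fst_unique (hM : IsMatching I M) (h : (a, b) ∈ M) (h' : (a', b) ∈ M) :
    a = a' :=
  congrArg Prod.fst (hM.2.2 _ h _ h' rfl)

theorem Blocks.prefA_of_mem (hM : IsMatching I M) (hab : Blocks I M a b) (h : (a, b') ∈ M) :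
    I.prefA a b b' := by
  rcases hab.2.2.1 with hfree | ⟨c, hc, hpref⟩
  · exact absurd ⟨b', h⟩ hfree
  · exact hM.snd_unique hc h ▸ hpref

theorem Blocks.prefB_of_mem (hM : IsMatching I M) (hab : Blocks I M a b) (h : (a', b) ∈ M) :
    I.prefB b a a' := by
  rcases hab.2.2.2 with hfree | ⟨c, hc, hpref⟩
  · exact absurd ⟨a', h⟩ hfree
  · exact hM.fst_unique hc h ▸ hpref

theorem IsStable.mem_of_forall_pref (hM : IsStable I M) (hE : I.E a b)
    (ha : ∀ b', (a, b') ∈ M → b' ≠ b → I.prefA a b b')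
    (hb : ∀ a', (a', b) ∈ M → a' ≠ a → I.prefB b a a') : (a, b) ∈ M := by
  by_contra hab
  refine hM.2 a b ⟨hE, hab, or_iff_not_imp_left.2 fun hmatched => ?_,
    or_iff_not_imp_left.2 fun hmatched => ?_⟩
  · obtain ⟨b', h⟩ := not_not.1 hmatched
    exact ⟨b', h, ha b' h fun hb' => hab (hb' ▸ h)⟩
  · obtain ⟨a', h⟩ := not_not.1 hmatched
    exact ⟨a', h, hb a' h fun ha' => hab (ha' ▸ h)⟩

end Matching

section AuxiliaryInstance

variable [Fintype A] {I : PrefSys A B}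

theorem starSys_prefA_dummy {a : A} {i : Fin (Fintype.card A)} {j : Fin (Fintype.card A - 1)}
    {w : BStar A B} (hij : (i : ℕ) = j + 1) (hE : (starSys I).E (a, i) w)
    (hw : w ≠ Sum.inr (a, j)) : (starSys I).prefA (a, i) (Sum.inr (a, j)) w := by
  rcases w with b | ⟨a', j'⟩
  · exact ⟨rfl, hij.symm⟩
  · obtain ⟨rfl, hcopy | hcopy⟩ := hE
    · exact ⟨rfl, rfl, hij.symm, hcopy.symm⟩
    · exact absurd (by rw [show j' = j from Fin.ext (by omega)]) hw

theorem starSys_prefB_dummy {a : A} {i : Fin (Fintype.card A)} {j : Fin (Fintype.card A - 1)}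
    {x : AStar A} (hij : (i : ℕ) = j) (hE : (starSys I).E x (Sum.inr (a, j)))
    (hx : x ≠ (a, i)) : (starSys I).prefB (Sum.inr (a, j)) (a, i) x := by
  obtain ⟨a', i'⟩ := x
  obtain ⟨rfl, hcopy | hcopy⟩ := hE
  · exact absurd (by rw [show i' = i from Fin.ext (by omega)]) hx
  · exact ⟨rfl, rfl, hij, hcopy⟩

variable {S : Finset (AStar A × BStar A B)} {a : A} {b : B} {i k : Fin (Fintype.card A)}

/-- The copy `x` of a node of `A` is active in `S` if `S` does not match it to a dummy node. The
index of the active copy of `a` is the level of `a`. -/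
def IsActive (S : Finset (AStar A × BStar A B)) (x : AStar A) : Prop :=
  ∀ d, (x, Sum.inr d) ∉ S

theorem IsMatching.isActive_of_mem (hS : IsMatching (starSys I) S) {x : AStar A}
    (h : (x, Sum.inl b) ∈ S) : IsActive S x :=
  fun _ hd => Sum.inl_ne_inr (hS.snd_unique h hd)

theorem IsMatching.exists_isActive (hS : IsMatching (starSys I) S) (a : A) :
    ∃ k, IsActive S (a, k) := by
  by_contra! hnone
  have dummy_of_copy (i : Fin (Fintype.card A)) : ∃ j, ((a, i), Sum.inr (a, j)) ∈ S := by
    obtain ⟨⟨a', j⟩, hd⟩ : ∃ d, ((a, i), Sum.inr d) ∈ S := by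
      simpa only [IsActive, not_forall, not_not] using hnone i
    obtain ⟨rfl, -⟩ : a = a' ∧ _ := hS.1 _ hd
    exact ⟨j, hd⟩
  choose f hf using dummy_of_copy
  have f_injective : f.Injective := fun i i' hii' =>
    congrArg Prod.snd (hS.fst_unique (hf i) (hii' ▸ hf i'))
  have card_le := Fintype.card_le_of_injective f f_injective
  have card_pos : 0 < Fintype.card A := Fintype.card_pos_iff.2 ⟨a⟩
  simp only [Fintype.card_fin] at card_le
  omega

theorem IsStable.exists_mem_dummy (hS : IsStable (starSys I) S) (a : A)
    (j : Fin (Fintype.card A - 1)) : ∃ i, ((a, i), Sum.inr (a, j)) ∈ S := by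
  by_contra! hfree
  have hi : (j : ℕ) + 1 < Fintype.card A := by omega
  refine hfree ⟨j + 1, hi⟩ (hS.mem_of_forall_pref ⟨rfl, Or.inr rfl⟩ ?_ ?_)
  · exact fun w hw hne => starSys_prefA_dummy rfl (hS.1.1 _ hw) hne
  · rintro ⟨a', i⟩ h
    obtain ⟨rfl, -⟩ : a' = a ∧ _ := hS.1.1 _ h
    exact absurd h (hfree i)

theorem IsStable.isActive_unique (hS : IsStable (starSys I) S) (hi : IsActive S (a, i))
    (hk : IsActive S (a, k)) : i = k := by
  by_contra hik
  choose f hf using hS.exists_mem_dummy a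
  have f_injective : f.Injective := fun j j' hjj' =>
    congrArg Prod.snd (Sum.inr_injective (hS.1.snd_unique (hf j) (hjj' ▸ hf j')))
  have image_subset : Finset.univ.image f ⊆ {i, k}ᶜ := by
    intro x hx
    obtain ⟨j, -, rfl⟩ := Finset.mem_image.1 hx
    simp only [Finset.mem_compl, Finset.mem_insert, Finset.mem_singleton]
    rintro (h | h)
    · exact hi _ (h ▸ hf j)
    · exact hk _ (h ▸ hf j)
  have card_le := Finset.card_le_card image_subset
  rw [Finset.card_image_of_injective _ f_injective, Finset.card_compl, Finset.card_pair hik,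
    Finset.card_univ, Fintype.card_fin, Fintype.card_fin] at card_le
  omega

theorem IsStable.exists_mem_of_isActive (hS : IsStable (starSys I) S)
    (hk : IsActive S (a, k)) (hlt : (k : ℕ) + 1 < Fintype.card A) :
    ∃ b, ((a, k), Sum.inl b) ∈ S := by
  by_contra! hfree
  refine hk (a, ⟨k, by omega⟩) (hS.mem_of_forall_pref ⟨rfl, Or.inl rfl⟩ ?_ ?_)
  · rintro (b | d) h
    · exact absurd h (hfree b)
    · exact absurd h (hk d)
  · exact fun x hx hne => starSys_prefB_dummy rfl (hS.1.1 _ hx) hne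

theorem IsStable.atLevelA_of_isActive (hS : IsStable (starSys I) S)
    (hk : IsActive S (a, k)) : AtLevelA S a k := by
  rcases lt_or_eq_of_le (Nat.succ_le_of_lt k.isLt) with hlt | hlast
  · exact Or.inl ⟨hlt, k, rfl, hS.exists_mem_of_isActive hk hlt⟩
  · refine Or.inr ⟨hlast, fun j hj b hb => ?_⟩
    obtain rfl := hS.isActive_unique hk (hS.1.isActive_of_mem hb)
    exact hj.ne hlast

theorem IsStable.atLevelB_of_mem (hS : IsStable (starSys I) S)
    (h : ((a, i), Sum.inl b) ∈ S) (hi : 1 ≤ (i : ℕ)) : AtLevelB S b i :=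
  Or.inl ⟨hi, i.isLt, i, rfl, a, hS.atLevelA_of_isActive (hS.1.isActive_of_mem h), h⟩

variable [Fintype B]

theorem mem_proj : (a, b) ∈ proj S ↔ ∃ i, ((a, i), Sum.inl b) ∈ S := by
  simp only [proj, Finset.mem_filter, Finset.mem_univ, true_and]

theorem IsStable.isMatching_proj (hS : IsStable (starSys I) S) : IsMatching I (proj S) := by
  refine ⟨?_, ?_, ?_⟩
  · rintro ⟨a, b⟩ hp
    obtain ⟨i, h⟩ := mem_proj.1 hp
    exact hS.1.1 _ h
  · rintro ⟨a, b⟩ hp ⟨a', b'⟩ hq (rfl : a = a')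
    obtain ⟨i, h⟩ := mem_proj.1 hp
    obtain ⟨i', h'⟩ := mem_proj.1 hq
    obtain rfl := hS.isActive_unique (hS.1.isActive_of_mem h) (hS.1.isActive_of_mem h')
    rw [Sum.inl_injective (hS.1.snd_unique h h')]
  · rintro ⟨a, b⟩ hp ⟨a', b'⟩ hq (rfl : b = b')
    obtain ⟨i, h⟩ := mem_proj.1 hp
    obtain ⟨i', h'⟩ := mem_proj.1 hq
    rw [(Prod.mk.inj (hS.1.fst_unique h h')).1]

theorem IsStable.exists_mem_lt_of_blocks_proj (hS : IsStable (starSys I) S)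
    (hab : Blocks I (proj S) a b) (hk : IsActive S (a, k)) :
    ∃ a' i, ((a', i), Sum.inl b) ∈ S ∧ k < i := by
  by_contra! hle
  refine hab.2.1 (mem_proj.2 ⟨k, hS.mem_of_forall_pref hab.1 ?_ ?_⟩)
  · rintro (b' | d) h -
    · exact (hab.prefA_of_mem hS.isMatching_proj (mem_proj.2 ⟨k, h⟩) : I.prefA a b b')
    · exact absurd h (hk d)
  · rintro ⟨a', i⟩ h -
    have hpref : I.prefB b a a' := hab.prefB_of_mem hS.isMatching_proj (mem_proj.2 ⟨i, h⟩)
    exact (hle a' i h).lt_or_eq.imp_right fun hik => ⟨congrArg Fin.val hik.symm, hpref⟩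

end AuxiliaryInstance

theorem stmt7_general {A B : Type*} [Fintype A] [Fintype B] (I : PrefSys A B)
    (S : Finset (AStar A × BStar A B)) (hS : IsStable (starSys I) S) (a : A) (b : B)
    (hab : Blocks I (proj S) a b) :
    ∃ i j : ℕ, AtLevelA S a i ∧ AtLevelB S b j ∧ i + 1 ≤ j := by
  obtain ⟨k, hk⟩ := hS.1.exists_isActive a
  obtain ⟨a', i, hmem, hki⟩ := hS.exists_mem_lt_of_blocks_proj hab hk
  exact ⟨k, i, hS.atLevelA_of_isActive hk, hS.atLevelB_of_mem hmem (Nat.one_le_of_lt hki), hki⟩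

/-- For a stable matching `S` in `G*` with level partitions as above:
every edge of `E` that blocks `S'` lies in `A_i × B_j` for some `i ≤ j − 1`. -/
theorem stmt7 {A B : Type*} [Fintype A] [Fintype B] [DecidableEq A] [DecidableEq B]
    (I : PrefSys A B) (hI : I.IsValid)
    (S : Finset (AStar A × BStar A B)) (hS : IsStable (starSys I) S) :
    ∀ (a : A) (b : B), Blocks I (proj S) a b →
      ∃ i j : ℕ, AtLevelA S a i ∧ AtLevelB S b j ∧ i + 1 ≤ j :=
  stmt7_general I S hS

end PopMax
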